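/- Let K ≥ 1 be an integer, P a real n×n̄ matrix, and for each k ≤ K let f_k ≥ 1 and S^{k1},…,S^{k n̄} be symmetric f_k×f_k matrices defining S_k[z] = ∑_i z_i S^{ki}, such that z = 0 whenever S_k[z] = 0 for all k; let 𝒯 ⊆ ℝ_{≥0}^K be a nonempty convex compact monotone set containing a point with all coordinates positive, and ρ > 0. Let p ∈ ℝ^n and q, γ ∈ ℝ. Then 2pᵀζ + q ≤ γ holds for every ζ ∈ 𝒳[ρ] if and only if there exist positive semidefinite matrices Λ_k ∈ S^{f_k} (k = 1,…,K) and α ∈ ℝ such that the block matrix [[α, −pᵀP],[−Pᵀp, ∑_k 𝒮_k^*[Λ_k]]] is positive semidefinite and α + ρ·φ_𝒯(λ[Λ]) + q ≤ γ. -/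

import Mathlib

open Matrix BigOperators

noncomputable section

/-- The spectratope `𝒳[s]`: image under `z ↦ P z` of the set of `z` such that
`S_k[z]² ⪯ s t_k I` for some `t ∈ 𝒯`, where `S_k[z] = ∑ i z_i S^{ki}`. -/
def spectratope {n nb K : ℕ} (f : Fin K → ℕ) (P : Matrix (Fin n) (Fin nb) ℝ)
    (Smat : (k : Fin K) → Fin nb → Matrix (Fin (f k)) (Fin (f k)) ℝ)
    (T : Set (Fin K → ℝ)) (s : ℝ) : Set (Fin n → ℝ) :=
  {x | ∃ z : Fin nb → ℝ, ∃ t ∈ T, x = P *ᵥ z ∧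
    ∀ k, ((s * t k) • (1 : Matrix (Fin (f k)) (Fin (f k)) ℝ)
            - (∑ i, z i • Smat k i) ^ 2).PosSemidef}

/-- Support function `φ_𝒯(λ) = max_{t ∈ 𝒯} λᵀ t`. -/
def suppFn {K : ℕ} (T : Set (Fin K → ℝ)) (lam : Fin K → ℝ) : ℝ :=
  sSup ((fun t => ∑ k, lam k * t k) '' T)

/-- `𝒮_k^*[Λ]`, the matrix with entries `Tr(Λ (S^{ki} S^{kj} + S^{kj} S^{ki})/2)`. -/
def calSstar {nb fk : ℕ} (Sm : Fin nb → Matrix (Fin fk) (Fin fk) ℝ)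
    (Λ : Matrix (Fin fk) (Fin fk) ℝ) : Matrix (Fin nb) (Fin nb) ℝ :=
  Matrix.of fun i j => (Λ * ((1 / 2 : ℝ) • (Sm i * Sm j + Sm j * Sm i))).trace

/-- `λ[Λ] = (Tr Λ_1, …, Tr Λ_K)`. -/
def lamOf {K : ℕ} {f : Fin K → ℕ}
    (Λ : (k : Fin K) → Matrix (Fin (f k)) (Fin (f k)) ℝ) : Fin K → ℝ :=
  fun k => (Λ k).trace

/-- `Q_+ = [[Q, q],[qᵀ, 0]]`. -/
def qPlus {m : ℕ} (Q : Matrix (Fin m) (Fin m) ℝ) (q : Fin m → ℝ) :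
    Matrix (Fin m ⊕ Unit) (Fin m ⊕ Unit) ℝ :=
  Matrix.fromBlocks Q (Matrix.of fun i _ => q i) (Matrix.of fun _ j => q j) 0

/-- `BlockDiag(M, μ)`. -/
def blockDiagOne {m : ℕ} (M : Matrix (Fin m) (Fin m) ℝ) (μ : ℝ) :
    Matrix (Fin m ⊕ Unit) (Fin m ⊕ Unit) ℝ :=
  Matrix.fromBlocks M 0 0 (Matrix.of fun _ _ => μ)

open Topology

/-- The trace of a product of two positive semidefinite real matrices is nonnegative. -/
lemma Matrix.PosSemidef.trace_mul_nonneg {m : Type*} [Fintype m] {A B : Matrix m m ℝ}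
    (hA : A.PosSemidef) (hB : B.PosSemidef) : 0 ≤ (A * B).trace := by
  obtain ⟨d, v, rfl⟩ := Matrix.posSemidef_iff_eq_sum_vecMulVec.mp hB
  rw [Matrix.mul_sum, Matrix.trace_sum]
  refine Finset.sum_nonneg fun i _ => ?_
  rw [Matrix.mul_vecMulVec, Matrix.trace_vecMulVec, dotProduct_comm]
  exact hA.dotProduct_mulVec_nonneg (v i)

/-- A linear functional that is nonnegative on all matrices with nonnegative quadratic form is
the trace pairing with a positive semidefinite matrix. -/
lemma exists_posSemidef_trace_of_nonneg {m : Type*} [Fintype m] [DecidableEq m]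
    (l : Matrix m m ℝ →ₗ[ℝ] ℝ)
    (hl : ∀ N : Matrix m m ℝ, (∀ x, 0 ≤ x ⬝ᵥ (N *ᵥ x)) → 0 ≤ l N) :
    ∃ Λ : Matrix m m ℝ, Λ.PosSemidef ∧ ∀ N, l N = (Λ * N).trace := by
  set Λ : Matrix m m ℝ := Matrix.of fun i j => l (Matrix.single j i 1) with hΛ
  have hrep : ∀ N, l N = (Λ * N).trace := by
    intro N
    conv_lhs => rw [Matrix.matrix_eq_sum_single N]
    simp only [map_sum, Matrix.trace, Matrix.diag, Matrix.mul_apply]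
    rw [Finset.sum_comm]
    refine Finset.sum_congr rfl fun i _ => Finset.sum_congr rfl fun j _ => ?_
    have : Matrix.single j i (N j i) = N j i • Matrix.single j i (1 : ℝ) := by
      simp [Matrix.smul_single]
    rw [this, map_smul, hΛ, Matrix.of_apply, smul_eq_mul, mul_comm]
  have hle : ∀ i j, l (Matrix.single i j 1) ≤ l (Matrix.single j i 1) := by
    intro i j
    have := hl (Matrix.single j i 1 - Matrix.single i j 1) fun x => by
      have hform : ∀ a b, x ⬝ᵥ (Matrix.single a b (1 : ℝ) *ᵥ x) = x a * x b := fun a b => by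
        rw [Matrix.single_mulVec]
        change x ⬝ᵥ Pi.single a (1 * x b) = _
        rw [dotProduct_single, one_mul]
      rw [Matrix.sub_mulVec, dotProduct_sub, hform, hform, mul_comm, sub_self]
    rw [map_sub] at this
    linarith
  refine ⟨Λ, .of_dotProduct_mulVec_nonneg ?_ fun x => ?_, hrep⟩
  · ext i j
    simpa [hΛ] using le_antisymm (hle _ _) (hle _ _)
  · have h0 := hl (Matrix.vecMulVec x x) fun y => by
      rw [Matrix.vecMulVec_mulVec, dotProduct_smul]
      simp only [MulOpposite.smul_eq_mul_unop, MulOpposite.unop_op]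
      rw [dotProduct_comm]
      exact mul_self_nonneg _
    rw [hrep, Matrix.mul_vecMulVec, Matrix.trace_vecMulVec, dotProduct_comm] at h0
    simpa using h0

/-- The quadratic form of the square of a symmetric matrix is a squared norm. -/
lemma Matrix.IsSymm.dotProduct_sq_mulVec {m : Type*} [Fintype m] [DecidableEq m]
    {A : Matrix m m ℝ} (hA : A.IsSymm) (x : m → ℝ) :
    x ⬝ᵥ ((A ^ 2) *ᵥ x) = (A *ᵥ x) ⬝ᵥ (A *ᵥ x) := by
  rw [sq, ← Matrix.mulVec_mulVec, Matrix.dotProduct_mulVec, ← Matrix.mulVec_transpose, hA.eq]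

/-- Matrices whose quadratic form is strictly dominated by that of `B` form an open set. -/
lemma isOpen_setOf_quadForm_lt {m : Type*} [Fintype m] [DecidableEq m] (B : Matrix m m ℝ) :
    IsOpen {W : Matrix m m ℝ | ∀ x : m → ℝ, x ≠ 0 → x ⬝ᵥ (W *ᵥ x) < x ⬝ᵥ (B *ᵥ x)} := by
  have heq : {W : Matrix m m ℝ | ∀ x : m → ℝ, x ≠ 0 → x ⬝ᵥ (W *ᵥ x) < x ⬝ᵥ (B *ᵥ x)} =
      {W | ∀ x ∈ Metric.sphere (0 : m → ℝ) 1, x ⬝ᵥ (W *ᵥ x) < x ⬝ᵥ (B *ᵥ x)} := by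
    ext W
    constructor
    · intro h x hx
      exact h x fun h0 => by simp [h0] at hx
    · intro h x hx
      have hn : 0 < ‖x‖ := norm_pos_iff.mpr hx
      have := h (‖x‖⁻¹ • x) (by simp [norm_smul, hn.ne'])
      simp only [Matrix.mulVec_smul, dotProduct_smul, smul_dotProduct, smul_eq_mul] at this
      have hi : 0 < ‖x‖⁻¹ := inv_pos.mpr hn
      exact lt_of_mul_lt_mul_left (lt_of_mul_lt_mul_left this hi.le) hi.le
  rw [heq, isOpen_iff_mem_nhds]
  intro W hW
  refine (isCompact_sphere (0 : m → ℝ) 1).eventually_forall_of_forall_eventually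
    (P := fun W x => x ⬝ᵥ (W *ᵥ x) < x ⬝ᵥ (B *ᵥ x)) fun x hx => ?_
  refine ContinuousAt.eventually_lt (f := fun z : Matrix m m ℝ × (m → ℝ) => z.2 ⬝ᵥ (z.1 *ᵥ z.2))
    (g := fun z : Matrix m m ℝ × (m → ℝ) => z.2 ⬝ᵥ (B *ᵥ z.2)) ?_ ?_ (hW x hx)
  · exact (by fun_prop : Continuous _).continuousAt
  · exact (by fun_prop : Continuous _).continuousAt

/-- Convexity of the squared Euclidean norm. -/
lemma dotProduct_self_convex {m : Type*} [Fintype m] (u v : m → ℝ) {a b : ℝ}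
    (ha : 0 ≤ a) (hb : 0 ≤ b) (hab : a + b = 1) :
    (a • u + b • v) ⬝ᵥ (a • u + b • v) ≤ a * (u ⬝ᵥ u) + b * (v ⬝ᵥ v) := by
  simp only [dotProduct, Finset.mul_sum, ← Finset.sum_add_distrib]
  refine Finset.sum_le_sum fun i _ => ?_
  obtain rfl : b = 1 - a := by linarith
  simp only [Pi.add_apply, Pi.smul_apply, smul_eq_mul]
  nlinarith [mul_nonneg (mul_nonneg ha hb) (sq_nonneg (u i - v i))]

/-- The perturbation set of the problem of maximizing `g z` subject to
`A_k[z]² ⪯ ρ t_k I`, `t ∈ T`. -/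
def perturbationSet {V : Type*} [AddCommGroup V] [Module ℝ V] {K : ℕ} {f : Fin K → ℕ}
    (A : (k : Fin K) → V →ₗ[ℝ] Matrix (Fin (f k)) (Fin (f k)) ℝ) (T : Set (Fin K → ℝ))
    (ρ : ℝ) (g : V →ₗ[ℝ] ℝ) (c : ℝ) :
    Set (((k : Fin K) → Matrix (Fin (f k)) (Fin (f k)) ℝ) × ℝ) :=
  {w | ∃ z, ∃ t ∈ T, (∀ k, ∀ x : Fin (f k) → ℝ, x ≠ 0 →
      x ⬝ᵥ (w.1 k *ᵥ x) < x ⬝ᵥ (((ρ * t k) • 1 - A k z ^ 2) *ᵥ x)) ∧ w.2 < g z - c}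

section Duality

variable {V : Type*} [AddCommGroup V] [Module ℝ V] {K : ℕ} {f : Fin K → ℕ}
  {A : (k : Fin K) → V →ₗ[ℝ] Matrix (Fin (f k)) (Fin (f k)) ℝ} {T : Set (Fin K → ℝ)}
  {ρ : ℝ} {g : V →ₗ[ℝ] ℝ} {c : ℝ}

lemma isOpen_perturbationSet : IsOpen (perturbationSet A T ρ g c) := by
  have : perturbationSet A T ρ g c = ⋃ z, ⋃ t ∈ T,
      (⋂ k, (fun w : ((k : Fin K) → Matrix (Fin (f k)) (Fin (f k)) ℝ) × ℝ => w.1 k) ⁻¹'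
        {W | ∀ x, x ≠ 0 → x ⬝ᵥ (W *ᵥ x) < x ⬝ᵥ (((ρ * t k) • 1 - A k z ^ 2) *ᵥ x)}) ∩
      {w | w.2 < g z - c} := by
    ext w
    simp only [perturbationSet, Set.mem_ofPred_eq, Set.mem_iUnion, Set.mem_inter_iff,
      Set.mem_iInter, Set.mem_preimage, exists_prop]
  rw [this]
  refine isOpen_iUnion fun z => isOpen_biUnion fun t _ => IsOpen.inter ?_ ?_
  · exact isOpen_iInter_of_finite fun k => (isOpen_setOf_quadForm_lt _).preimage (by fun_prop)
  · exact isOpen_lt continuous_snd continuous_const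

lemma quadForm_sub_sq {m : Type*} [Fintype m] [DecidableEq m] {B : Matrix m m ℝ} (hB : B.IsSymm)
    (s : ℝ) (x : m → ℝ) :
    x ⬝ᵥ ((s • 1 - B ^ 2) *ᵥ x) = s * (x ⬝ᵥ x) - (B *ᵥ x) ⬝ᵥ (B *ᵥ x) := by
  rw [Matrix.sub_mulVec, dotProduct_sub, hB.dotProduct_sq_mulVec, Matrix.smul_mulVec,
    Matrix.one_mulVec, dotProduct_smul, smul_eq_mul]

lemma convex_perturbationSet (hA : ∀ k z, (A k z).IsSymm) (hT : Convex ℝ T) :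
    Convex ℝ (perturbationSet A T ρ g c) := by
  rintro ⟨W₁, r₁⟩ ⟨z₁, t₁, ht₁, h₁, hr₁⟩ ⟨W₂, r₂⟩ ⟨z₂, t₂, ht₂, h₂, hr₂⟩ a b ha hb hab
  have hcomb : ∀ {u v u' v' : ℝ}, u < u' → v < v' → a * u + b * v < a * u' + b * v' := by
    intro u v u' v' hu hv
    rcases ha.eq_or_lt with rfl | ha'
    · simp_all
    · exact add_lt_add_of_lt_of_le (mul_lt_mul_of_pos_left hu ha')
        (mul_le_mul_of_nonneg_left hv.le hb)
  refine ⟨a • z₁ + b • z₂, a • t₁ + b • t₂, hT ht₁ ht₂ ha hb hab, fun k x hx => ?_, ?_⟩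
  · have e := hcomb (h₁ k x hx) (h₂ k x hx)
    have hconv := dotProduct_self_convex (A k z₁ *ᵥ x) (A k z₂ *ᵥ x) ha hb hab
    rw [quadForm_sub_sq (hA k _)] at e ⊢
    rw [quadForm_sub_sq (hA k _)] at e
    simp only [Prod.smul_mk, Prod.mk_add_mk, Pi.add_apply, Pi.smul_apply, map_add, map_smul,
      Matrix.add_mulVec, Matrix.smul_mulVec, dotProduct_add, dotProduct_smul, smul_eq_mul]
      at e hconv ⊢
    linarith
  · have e := hcomb hr₁ hr₂
    simp only [Prod.smul_mk, Prod.mk_add_mk, map_add, map_smul, smul_eq_mul]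
    have : a * (g z₁ - c) + b * (g z₂ - c) = a * g z₁ + b * g z₂ - c := by
      linear_combination (-c) * hab
    linarith

lemma dotProduct_self_pos {m : Type*} [Fintype m] {x : m → ℝ} (hx : x ≠ 0) : 0 < x ⬝ᵥ x := by
  simpa using (Matrix.dotProduct_star_self_pos_iff (v := x)).mpr hx

lemma sub_smul_one_mem_perturbationSet {z : V} {t : Fin K → ℝ} (ht : t ∈ T) {ε : ℝ} (hε : 0 < ε) :
    ((fun k => (ρ * t k) • 1 - A k z ^ 2 - ε • 1, g z - c - ε) :
      ((k : Fin K) → Matrix (Fin (f k)) (Fin (f k)) ℝ) × ℝ) ∈ perturbationSet A T ρ g c := by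
  refine ⟨z, t, ht, fun k x hx => ?_, by simpa using hε⟩
  dsimp only
  rw [Matrix.sub_mulVec _ (ε • 1), dotProduct_sub, Matrix.smul_mulVec _ 1, Matrix.one_mulVec,
    dotProduct_smul, smul_eq_mul]
  linarith [mul_pos hε (dotProduct_self_pos hx)]

/-- Lagrange duality for maximizing a linear form over the set given by
`A_k[z]² ⪯ ρ t_k I`, `t ∈ T`. -/
lemma exists_multipliers (hA : ∀ k z, (A k z).IsSymm) (hT : Convex ℝ T)
    (hTpos : ∃ t ∈ T, ∀ k, 0 < t k) (hρ : 0 < ρ)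
    (h : ∀ z, ∀ t ∈ T, (∀ k, ((ρ * t k) • (1 : Matrix (Fin (f k)) (Fin (f k)) ℝ)
      - A k z ^ 2).PosSemidef) → g z ≤ c) :
    ∃ Λ : (k : Fin K) → Matrix (Fin (f k)) (Fin (f k)) ℝ, (∀ k, (Λ k).PosSemidef) ∧
      ∀ z, ∀ t ∈ T, g z + ∑ k, (Λ k * ((ρ * t k) • 1 - A k z ^ 2)).trace ≤ c := by
  have hsymm : ∀ k z (s : ℝ), (s • (1 : Matrix (Fin (f k)) (Fin (f k)) ℝ)
      - A k z ^ 2).IsHermitian := by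
    intro k z s
    simp [Matrix.IsHermitian, Matrix.conjTranspose_eq_transpose_of_trivial, (hA k z).eq]
  have h0 : (0 : ((k : Fin K) → Matrix (Fin (f k)) (Fin (f k)) ℝ) × ℝ) ∉
      perturbationSet A T ρ g c := by
    rintro ⟨z, t, ht, hG, hr⟩
    have := h z t ht fun k => .of_dotProduct_mulVec_nonneg (hsymm k z _) fun x => by
      by_cases hx : x = 0
      · simp [hx]
      · simpa using (hG k x hx).le
    simp only [Prod.snd_zero] at hr
    linarith
  have : ∀ m, LocallyConvexSpace ℝ (Matrix (Fin m) (Fin m) ℝ) := fun m =>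
    inferInstanceAs (LocallyConvexSpace ℝ (Fin m → Fin m → ℝ))
  obtain ⟨L, hL⟩ := geometric_hahn_banach_open_point (convex_perturbationSet hA hT)
    isOpen_perturbationSet h0
  simp only [map_zero] at hL
  obtain ⟨t₀, ht₀, ht₀pos⟩ := hTpos
  set μ : ℝ := L (0, 1) with hμdef
  have hLr : ∀ r : ℝ, L (0, r) = r * μ := by
    intro r
    rw [hμdef, ← smul_eq_mul, ← map_smul]
    simp
  have hslater : ∀ W : (k : Fin K) → Matrix (Fin (f k)) (Fin (f k)) ℝ,
      (∀ k x, x ⬝ᵥ (W k *ᵥ x) ≤ 0) → ∀ r, r < -c → (W, r) ∈ perturbationSet A T ρ g c := by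
    intro W hW r hr
    refine ⟨0, t₀, ht₀, fun k x hx => ?_, by simpa using hr⟩
    rw [quadForm_sub_sq (hA k _)]
    have := mul_pos (mul_pos hρ (ht₀pos k)) (dotProduct_self_pos hx)
    have := hW k x
    simp only [map_zero, Matrix.zero_mulVec, dotProduct_zero]
    linarith
  have hμ : 0 < μ := by
    have := hL _ (hslater 0 (by simp) (-|c| - 1) (by linarith [le_abs_self c]))
    rw [hLr] at this
    nlinarith [abs_nonneg c]
  have hcone : ∀ N : (k : Fin K) → Matrix (Fin (f k)) (Fin (f k)) ℝ,
      (∀ k x, 0 ≤ x ⬝ᵥ (N k *ᵥ x)) → 0 ≤ L (N, 0) := by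
    intro N hN
    by_contra! hneg
    obtain ⟨s, hs⟩ : ∃ s : ℝ, 0 ≤ s ∧ (|c| + 1) * μ ≤ s * -L (N, 0) :=
      ⟨(|c| + 1) * μ / -L (N, 0), by
        have : 0 < -L (N, 0) := by linarith
        positivity, by
        rw [div_mul_cancel₀ _ (by linarith)]⟩
    have := hL _ (hslater (-(s • N)) (fun k x => by
      simp only [Pi.neg_apply, Pi.smul_apply, Matrix.neg_mulVec, Matrix.smul_mulVec,
        dotProduct_neg, dotProduct_smul, smul_eq_mul]
      have := mul_nonneg hs.1 (hN k x)
      linarith) (-|c| - 1) (by linarith [le_abs_self c]))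
    have e : ((-(s • N), -|c| - 1) :
        ((k : Fin K) → Matrix (Fin (f k)) (Fin (f k)) ℝ) × ℝ) =
        (-s) • (N, 0) + (0, -|c| - 1) := by simp
    rw [e, map_add, map_smul, hLr, smul_eq_mul] at this
    linarith [hs.2]
  have hk : ∀ k, ∃ Λ : Matrix (Fin (f k)) (Fin (f k)) ℝ, Λ.PosSemidef ∧
      ∀ N, L (Pi.single k N, 0) = (Λ * N).trace := by
    intro k
    refine exists_posSemidef_trace_of_nonneg (L.toLinearMap ∘ₗ LinearMap.inl ℝ _ ℝ ∘ₗ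
      LinearMap.single ℝ (fun k => Matrix (Fin (f k)) (Fin (f k)) ℝ) k) fun N hN => ?_
    refine hcone _ fun j x => ?_
    by_cases hj : j = k
    · subst hj
      simpa using hN x
    · simp [hj]
  choose Λ hΛ hΛL using hk
  have hLW : ∀ W, L (W, 0) = ∑ k, (Λ k * W k).trace := by
    intro W
    have : ((W, 0) : ((k : Fin K) → Matrix (Fin (f k)) (Fin (f k)) ℝ) × ℝ) =
        ∑ k, (Pi.single k (W k), 0) := by
      refine Prod.ext ?_ ?_
      · rw [Prod.fst_sum]
        exact (Finset.univ_sum_single W).symm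
      · simp [Prod.snd_sum]
    rw [this, map_sum]
    exact Finset.sum_congr rfl fun k _ => hΛL k _
  refine ⟨fun k => μ⁻¹ • Λ k, fun k => (hΛ k).smul (inv_pos.mpr hμ).le, fun z t ht => ?_⟩
  set G : (k : Fin K) → Matrix (Fin (f k)) (Fin (f k)) ℝ :=
    fun k => (ρ * t k) • 1 - A k z ^ 2 with hG
  have hlim : L (G, g z - c) ≤ 0 := by
    have hcont : Filter.Tendsto (fun ε : ℝ => L (fun k => G k - ε • 1, g z - c - ε)) (𝓝[>] 0)
        (𝓝 (L (fun k => G k - (0 : ℝ) • 1, g z - c - 0))) := by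
      refine Filter.Tendsto.mono_left (Continuous.tendsto ?_ 0) nhdsWithin_le_nhds
      exact L.continuous.comp (by fun_prop)
    simp only [zero_smul, sub_zero] at hcont
    refine le_of_tendsto hcont ?_
    filter_upwards [self_mem_nhdsWithin] with ε hε
    exact (hL _ (sub_smul_one_mem_perturbationSet ht hε)).le
  have e : ((G, g z - c) : ((k : Fin K) → Matrix (Fin (f k)) (Fin (f k)) ℝ) × ℝ) =
      (G, 0) + (0, g z - c) := by simp
  rw [e, map_add, hLr, hLW] at hlim
  simp only [Matrix.smul_mul, Matrix.trace_smul, smul_eq_mul, ← Finset.mul_sum]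
  change g z + μ⁻¹ * ∑ k, (Λ k * G k).trace ≤ c
  have := mul_le_mul_of_nonneg_left hlim (inv_pos.mpr hμ).le
  have e2 : μ⁻¹ * (∑ k, (Λ k * G k).trace + (g z - c) * μ) =
      μ⁻¹ * ∑ k, (Λ k * G k).trace + (g z - c) := by field_simp
  linarith

end Duality

lemma calSstar_isSymm {nb fk : ℕ} (Sm : Fin nb → Matrix (Fin fk) (Fin fk) ℝ)
    (Λ : Matrix (Fin fk) (Fin fk) ℝ) : (calSstar Sm Λ).IsSymm := by
  ext i j
  simp [calSstar, add_comm]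

/-- `zᵀ 𝒮_k^*[Λ] z = Tr(Λ S_k[z]²)`. -/
lemma dotProduct_calSstar_mulVec {nb fk : ℕ} (Sm : Fin nb → Matrix (Fin fk) (Fin fk) ℝ)
    (Λ : Matrix (Fin fk) (Fin fk) ℝ) (z : Fin nb → ℝ) :
    z ⬝ᵥ (calSstar Sm Λ *ᵥ z) = (Λ * (∑ i, z i • Sm i) ^ 2).trace := by
  have hR : (Λ * (∑ i, z i • Sm i) ^ 2).trace =
      ∑ i, ∑ j, z i * z j * (Λ * (Sm i * Sm j)).trace := by
    simp only [sq, Finset.sum_mul_sum, Matrix.mul_sum, Matrix.trace_sum, Matrix.smul_mul,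
      Matrix.mul_smul, Matrix.trace_smul, smul_eq_mul]
    exact Finset.sum_congr rfl fun i _ => Finset.sum_congr rfl fun j _ => by ring
  have hL : z ⬝ᵥ (calSstar Sm Λ *ᵥ z) =
      (1 / 2) * ∑ i, ∑ j, z i * z j * (Λ * (Sm i * Sm j)).trace +
      (1 / 2) * ∑ i, ∑ j, z i * z j * (Λ * (Sm j * Sm i)).trace := by
    simp only [dotProduct, Matrix.mulVec, calSstar, Matrix.of_apply, Finset.mul_sum,
      ← Finset.sum_add_distrib, Matrix.mul_smul, Matrix.trace_smul, Matrix.mul_add,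
      Matrix.trace_add, smul_eq_mul]
    refine Finset.sum_congr rfl fun i _ => Finset.sum_congr rfl fun j _ => ?_
    ring
  have hswap : ∑ i, ∑ j, z i * z j * (Λ * (Sm j * Sm i)).trace =
      ∑ i, ∑ j, z i * z j * (Λ * (Sm i * Sm j)).trace := by
    rw [Finset.sum_comm]
    simp only [mul_comm (z _) (z _)]
  rw [hL, hR, hswap]
  ring

/-- Quadratic form of a bordered matrix. -/
lemma dotProduct_bordered_mulVec {m : Type*} [Fintype m] (α : ℝ) (g : m → ℝ)
    (M : Matrix m m ℝ) (x : Unit ⊕ m → ℝ) :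
    x ⬝ᵥ (Matrix.fromBlocks (Matrix.of fun (_ : Unit) (_ : Unit) => α)
      (Matrix.of fun (_ : Unit) j => -g j) (Matrix.of fun i (_ : Unit) => -g i) M *ᵥ x) =
    α * x (Sum.inl ()) ^ 2 - 2 * x (Sum.inl ()) * (g ⬝ᵥ (x ∘ Sum.inr)) +
      (x ∘ Sum.inr) ⬝ᵥ (M *ᵥ (x ∘ Sum.inr)) := by
  rw [Matrix.fromBlocks_mulVec]
  simp only [dotProduct, Fintype.sum_sum_type, Sum.elim_inl, Sum.elim_inr, Matrix.mulVec,
    Matrix.of_apply, Pi.add_apply, Function.comp_apply, Finset.univ_unique, Finset.sum_singleton,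
    neg_mul, Finset.sum_neg_distrib, mul_add, Finset.sum_add_distrib, mul_neg]
  have : ∑ i, x (Sum.inr i) * (g i * x (Sum.inl ())) =
      x (Sum.inl ()) * ∑ i, g i * x (Sum.inr i) := by
    rw [Finset.mul_sum]
    exact Finset.sum_congr rfl fun i _ => by ring
  simp only [PUnit.default_eq_unit, this]
  ring

/-- A bordered matrix is positive semidefinite as soon as its lower block is and the associated
quadratic inequality holds. -/
lemma posSemidef_bordered {m : Type*} [Fintype m] {α : ℝ} {g : m → ℝ}
    {M : Matrix m m ℝ} (hM : M.PosSemidef)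
    (h : ∀ z, 2 * (g ⬝ᵥ z) - z ⬝ᵥ (M *ᵥ z) ≤ α) :
    (Matrix.fromBlocks (Matrix.of fun (_ : Unit) (_ : Unit) => α)
      (Matrix.of fun (_ : Unit) j => -g j) (Matrix.of fun i (_ : Unit) => -g i) M).PosSemidef := by
  refine .of_dotProduct_mulVec_nonneg ?_ fun x => ?_
  · refine Matrix.IsHermitian.fromBlocks ?_ ?_ hM.isHermitian <;> ext <;> simp
  · rw [star_trivial, dotProduct_bordered_mulVec]
    set s := x (Sum.inl ())
    set z := x ∘ Sum.inr
    by_cases hs : s = 0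
    · simpa [hs] using hM.dotProduct_mulVec_nonneg z
    · have := h (s⁻¹ • z)
      simp only [Matrix.mulVec_smul, dotProduct_smul, smul_dotProduct, smul_eq_mul] at this
      have := mul_le_mul_of_nonneg_left this (sq_nonneg s)
      have e : s ^ 2 * (2 * (s⁻¹ * (g ⬝ᵥ z)) - s⁻¹ * (s⁻¹ * (z ⬝ᵥ (M *ᵥ z)))) =
          2 * s * (g ⬝ᵥ z) - z ⬝ᵥ (M *ᵥ z) := by field_simp
      linarith

theorem stmt13 {n nb K : ℕ} (hK : 1 ≤ K)
    (P : Matrix (Fin n) (Fin nb) ℝ)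
    (f : Fin K → ℕ) (hf : ∀ k, 1 ≤ f k)
    (Smat : (k : Fin K) → Fin nb → Matrix (Fin (f k)) (Fin (f k)) ℝ)
    (hSm : ∀ k i, (Smat k i).IsSymm)
    (hnd : ∀ z : Fin nb → ℝ, (∀ k, (∑ i, z i • Smat k i) = 0) → z = 0)
    (T : Set (Fin K → ℝ))
    (hTne : T.Nonempty) (hTconv : Convex ℝ T) (hTcomp : IsCompact T)
    (hTnonneg : ∀ t ∈ T, ∀ k, 0 ≤ t k)
    (hTmono : ∀ t t' : Fin K → ℝ, (∀ k, 0 ≤ t k) → (∀ k, t k ≤ t' k) → t' ∈ T → t ∈ T)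
    (hTpos : ∃ t ∈ T, ∀ k, 0 < t k)
    (ρ : ℝ) (hρ : 0 < ρ)
    (p : Fin n → ℝ) (q γ : ℝ) :
    (∀ ζ ∈ spectratope f P Smat T ρ, 2 * (p ⬝ᵥ ζ) + q ≤ γ) ↔
      (∃ Λ : (k : Fin K) → Matrix (Fin (f k)) (Fin (f k)) ℝ, ∃ α : ℝ,
        (∀ k, (Λ k).PosSemidef) ∧
        (Matrix.fromBlocks (Matrix.of fun (_ : Unit) (_ : Unit) => α)
            (Matrix.of fun (_ : Unit) j => -(Pᵀ *ᵥ p) j)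
            (Matrix.of fun i (_ : Unit) => -(Pᵀ *ᵥ p) i)
            (∑ k, calSstar (Smat k) (Λ k))).PosSemidef ∧
        α + ρ * suppFn T (lamOf Λ) + q ≤ γ) := by
  have hbdd : ∀ lam : Fin K → ℝ, BddAbove ((fun t => ∑ k, lam k * t k) '' T) := fun lam =>
    (hTcomp.image (by fun_prop)).bddAbove
  have hadj : ∀ z, p ⬝ᵥ (P *ᵥ z) = (Pᵀ *ᵥ p) ⬝ᵥ z := fun z => by
    rw [Matrix.dotProduct_mulVec, Matrix.mulVec_transpose]
  have hquad : ∀ (Λ : (k : Fin K) → Matrix (Fin (f k)) (Fin (f k)) ℝ) (z : Fin nb → ℝ),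
      z ⬝ᵥ ((∑ k, calSstar (Smat k) (Λ k)) *ᵥ z) =
        ∑ k, (Λ k * (∑ i, z i • Smat k i) ^ 2).trace := fun Λ z => by
    simp only [Matrix.sum_mulVec, dotProduct_sum, dotProduct_calSstar_mulVec]
  have htrace : ∀ (Λ : (k : Fin K) → Matrix (Fin (f k)) (Fin (f k)) ℝ) (z : Fin nb → ℝ)
      (t : Fin K → ℝ),
      ∑ k, (Λ k * ((ρ * t k) • 1 - (∑ i, z i • Smat k i) ^ 2)).trace =
        ρ * (∑ k, lamOf Λ k * t k) - ∑ k, (Λ k * (∑ i, z i • Smat k i) ^ 2).trace := by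
    intro Λ z t
    rw [Finset.mul_sum, ← Finset.sum_sub_distrib]
    refine Finset.sum_congr rfl fun k _ => ?_
    rw [Matrix.mul_sub, Matrix.trace_sub, Matrix.mul_smul, Matrix.mul_one, Matrix.trace_smul,
      smul_eq_mul, lamOf]
    ring
  have hsymm : ∀ k (z : Fin nb → ℝ), (∑ i, z i • Smat k i).IsSymm := fun k z => by
    simp only [Matrix.IsSymm, Matrix.transpose_sum, Matrix.transpose_smul, (hSm k _).eq]
  constructor
  · intro h
    obtain ⟨Λ, hΛ, hdual⟩ := exists_multipliers (T := T) (ρ := ρ) (c := γ - q)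
      (A := fun k => Fintype.linearCombination ℝ (Smat k))
      (g := (2 : ℝ) • dotProductBilin ℝ ℝ (Pᵀ *ᵥ p))
      (fun k z => by simpa only [Fintype.linearCombination_apply] using hsymm k z)
      hTconv hTpos hρ (fun z t ht hz => by
        have := h (P *ᵥ z) ⟨z, t, ht, rfl, by
          simpa only [Fintype.linearCombination_apply] using hz⟩
        rw [hadj] at this
        change 2 * ((Pᵀ *ᵥ p) ⬝ᵥ z) ≤ γ - q
        linarith)
    simp only [Fintype.linearCombination_apply, htrace, ← hquad] at hdual
    replace hdual : ∀ z, ∀ t ∈ T, 2 * ((Pᵀ *ᵥ p) ⬝ᵥ z) + (ρ * (∑ k, lamOf Λ k * t k) -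
        z ⬝ᵥ ((∑ k, calSstar (Smat k) (Λ k)) *ᵥ z)) ≤ γ - q := hdual
    refine ⟨Λ, γ - q - ρ * suppFn T (lamOf Λ), hΛ, posSemidef_bordered ?_ fun z => ?_, by linarith⟩
    · refine .of_dotProduct_mulVec_nonneg ?_ fun z => ?_
      · rw [Matrix.IsHermitian, Matrix.conjTranspose_eq_transpose_of_trivial,
          Matrix.transpose_sum]
        exact Finset.sum_congr rfl fun k _ => (calSstar_isSymm _ _).eq
      · rw [star_trivial, hquad]
        refine Finset.sum_nonneg fun k _ => (hΛ k).trace_mul_nonneg ?_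
        refine .of_dotProduct_mulVec_nonneg ?_ fun x => ?_
        · rw [Matrix.IsHermitian, Matrix.conjTranspose_eq_transpose_of_trivial,
            Matrix.transpose_pow, (hsymm k z).eq]
        · rw [star_trivial, (hsymm k z).dotProduct_sq_mulVec]
          exact Finset.sum_nonneg fun i _ => mul_self_nonneg _
    · have hsup : suppFn T (lamOf Λ) ≤ (γ - q - (2 * ((Pᵀ *ᵥ p) ⬝ᵥ z) -
          z ⬝ᵥ ((∑ k, calSstar (Smat k) (Λ k)) *ᵥ z))) / ρ := by
        refine csSup_le (hTne.image _) ?_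
        rintro _ ⟨t, ht, rfl⟩
        rw [le_div_iff₀ hρ]
        linarith [hdual z t ht]
      rw [le_div_iff₀ hρ] at hsup
      linarith
  · rintro ⟨Λ, α, hΛ, hblock, hle⟩ _ ⟨z, t, ht, rfl, hz⟩
    have h1 := hblock.dotProduct_mulVec_nonneg (Sum.elim (fun _ => 1) z)
    rw [star_trivial, dotProduct_bordered_mulVec, Sum.elim_comp_inr, hquad] at h1
    have h2 : 0 ≤ ∑ k, (Λ k * ((ρ * t k) • 1 - (∑ i, z i • Smat k i) ^ 2)).trace :=
      Finset.sum_nonneg fun k _ => (hΛ k).trace_mul_nonneg (hz k)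
    rw [htrace] at h2
    have h3 : ∑ k, lamOf Λ k * t k ≤ suppFn T (lamOf Λ) :=
      le_csSup (hbdd _) ⟨t, ht, rfl⟩
    have h4 := mul_le_mul_of_nonneg_left h3 hρ.le
    rw [hadj]
    simp only [Sum.elim_inl] at h1
    linarith
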